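/- Suppose n ≥ 3 and V ∈ B_q for some q > n/2. Then there exist constants C > 0 and k₀ ≥ 1 such that for all x, y ∈ ℝⁿ one has C⁻¹ ρ(x) (1 + |x−y|/ρ(x))^{−k₀} ≤ ρ(y) ≤ C ρ(x) (1 + |x−y|/ρ(x))^{k₀/(k₀+1)}. -/

import Mathlib

open MeasureTheory Metric Set Filter

noncomputable section

/-- `ℝⁿ` as Euclidean space. -/
abbrev En (n : ℕ) := EuclideanSpace ℝ (Fin n)

/-- The critical radius function `ρ(x)` associated to a potential `V`. -/
def critRad (n : ℕ) (V : En n → ℝ) (x : En n) : ℝ :=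
  sSup {r : ℝ | 0 < r ∧ r ^ (2 - (n : ℝ)) * ∫ y in ball x r, V y ≤ 1}

/-- `V` belongs to the reverse Hölder class `B_q` with constant `C`. -/
def ReverseHolder (n : ℕ) (V : En n → ℝ) (q C : ℝ) : Prop :=
  (∀ x, 0 ≤ V x) ∧ (∃ x, V x ≠ 0) ∧
  (∀ (x : En n) (r : ℝ), 0 < r → IntegrableOn (fun y => V y ^ q) (ball x r) volume) ∧
  (∀ (x : En n) (r : ℝ), 0 < r →
    ((volume (ball x r)).toReal⁻¹ * ∫ y in ball x r, V y ^ q) ^ (1 / q)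
      ≤ C * ((volume (ball x r)).toReal⁻¹ * ∫ y in ball x r, V y))

/-!
Let `Φ x r = r ^ (2 - n) * ∫ y in ball x r, V y`. Combining Hölder's inequality on a subset `E` of a
ball `B` with the reverse Hölder inequality on `B` shows that `E` carries at most the fraction
`C₀ * (|E| / |B|) ^ (1 - 1 / q)` of the mass of `B`. For concentric balls this is the decay
`Φ x r ≤ C₀ * (r / R) ^ (2 - n / q) * Φ x R`, whose exponent is positive because `q > n / 2`. For a
thin spherical shell it says that at least half of the mass of a ball lies in a slightly smaller
ball; iterating, `Φ y R` is at most a multiple of `(R / r) ^ ν * Φ x r` when `r ≤ R` and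
`dist x y ≤ R`.

At `R = ρ x + dist x y` and `r` close to `ρ x`, where `Φ x r ≤ 1`, the growth bound controls
`Φ y R`, and the decay then produces a radius, smaller by a power of `1 + dist x y / ρ x`, at which
`Φ y` is at most `1`. That is the lower bound for `ρ y`; the upper bound is the lower bound with `x`
and `y` interchanged, solved for `ρ y`.
-/

theorem le_mul_one_add_rpow_of_le_mul_one_add_div_rpow {u s C k : ℝ} (hu : 0 < u) (hs : 0 ≤ s)
    (hC : 1 ≤ C) (hk : 0 ≤ k) (h : u ≤ C * (1 + s / u) ^ k) :
    u ≤ C * 2 ^ k * (1 + s) ^ (k / (k + 1)) := by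
  have one_le_const : 1 ≤ C * 2 ^ k :=
    one_le_mul_of_one_le_of_one_le hC (Real.one_le_rpow one_le_two hk)
  rcases le_or_gt s u with hsu | hus
  · have one_le_factor : 1 ≤ (1 + s) ^ (k / (k + 1)) :=
      Real.one_le_rpow (by linarith) (by positivity)
    calc u ≤ C * (1 + s / u) ^ k := h
      _ ≤ C * 2 ^ k := by
        gcongr
        linarith [(div_le_one hu).2 hsu]
      _ ≤ C * 2 ^ k * (1 + s) ^ (k / (k + 1)) :=
        le_mul_of_one_le_right (by positivity) one_le_factor
  · have pow_bound : u ^ (k + 1) ≤ C * 2 ^ k * (1 + s) ^ k := calc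
      u ^ (k + 1) = u ^ k * u := Real.rpow_add_one hu.ne' k
      _ ≤ u ^ k * (C * (2 * (s / u)) ^ k) := by
        refine mul_le_mul_of_nonneg_left (h.trans ?_) (by positivity)
        gcongr
        linarith [(one_le_div hu).2 hus.le]
      _ = C * 2 ^ k * s ^ k := by
        rw [Real.mul_rpow two_pos.le (by positivity), Real.div_rpow hs hu.le]
        field_simp
      _ ≤ C * 2 ^ k * (1 + s) ^ k := by
        gcongr
        linarith
    calc u ≤ (C * 2 ^ k * (1 + s) ^ k) ^ (k + 1)⁻¹ :=
          (Real.le_rpow_inv_iff_of_pos hu.le (by positivity) (by positivity)).2 pow_bound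
      _ = (C * 2 ^ k) ^ (k + 1)⁻¹ * (1 + s) ^ (k / (k + 1)) := by
        rw [Real.mul_rpow (by positivity) (by positivity), ← Real.rpow_mul (by positivity),
          div_eq_mul_inv]
      _ ≤ C * 2 ^ k * (1 + s) ^ (k / (k + 1)) := by
        gcongr
        exact Real.rpow_le_self_of_one_le one_le_const (inv_le_one_of_one_le₀ (by linarith))

theorem le_mul_one_add_div_rpow_of_mul_rpow_neg_le {a b d C k : ℝ} (ha : 0 < a) (hb : 0 < b)
    (hd : 0 ≤ d) (hC : 1 ≤ C) (hk : 0 ≤ k) (h : C⁻¹ * b * (1 + d / b) ^ (-k) ≤ a) :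
    b ≤ C * 2 ^ k * a * (1 + d / a) ^ (k / (k + 1)) := by
  have hba : b / a ≤ C * (1 + d / a / (b / a)) ^ k := by
    rw [Real.rpow_neg (by positivity)] at h
    rw [div_div_div_cancel_right₀ ha.ne', div_le_iff₀ ha]
    calc b = C * (1 + d / b) ^ k * (C⁻¹ * b * ((1 + d / b) ^ k)⁻¹) := by field_simp
      _ ≤ C * (1 + d / b) ^ k * a := by gcongr
  have key := le_mul_one_add_rpow_of_le_mul_one_add_div_rpow (by positivity) (by positivity) hC hk
    hba
  rw [div_le_iff₀ ha] at key
  linarith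

/-- The critical radius of a function `φ` of the scale: the last scale at which `φ` is at most `1`.
As for every real `sSup`, the value is `0` if there is no such scale or no last one. -/
def criticalRadius (φ : ℝ → ℝ) : ℝ :=
  sSup {r : ℝ | 0 < r ∧ φ r ≤ 1}

theorem criticalRadius_eq_zero_of_forall_eq_zero {φ : ℝ → ℝ} (hφ : ∀ r, 0 < r → φ r = 0) :
    criticalRadius φ = 0 := by
  have all_scales : {r : ℝ | 0 < r ∧ φ r ≤ 1} = Ioi 0 := by
    ext r
    exact and_iff_left_of_imp fun hr => (hφ r hr).trans_le zero_le_one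
  rw [criticalRadius, all_scales, Real.sSup_of_not_bddAbove (not_bddAbove_Ioi 0)]

/-- The weak lower scaling condition: `φ` grows at least like the power `δ` of the scale, up to the
multiplicative constant `A`. -/
def LowerScaling (φ : ℝ → ℝ) (A δ : ℝ) : Prop :=
  ∀ ⦃r R : ℝ⦄, 0 < r → r ≤ R → φ r ≤ A * (r / R) ^ δ * φ R

namespace LowerScaling

variable {φ : ℝ → ℝ} {A δ : ℝ}

theorem one_le_const (hφ : LowerScaling φ A δ) (hpos : 0 < φ 1) : 1 ≤ A := by
  have h := hφ one_pos le_rfl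
  rw [div_one, Real.one_rpow, mul_one] at h
  exact (le_mul_iff_one_le_left hpos).1 h

theorem tendsto_atTop (hφ : LowerScaling φ A δ) (hδ : 0 < δ) (hpos : 0 < φ 1) :
    Tendsto φ atTop atTop := by
  have hA : 0 < A := one_pos.trans_le (hφ.one_le_const hpos)
  have power_le : ∀ᶠ R in atTop, φ 1 / A * R ^ δ ≤ φ R := by
    filter_upwards [eventually_ge_atTop 1] with R hR
    have hR₀ : 0 < R := one_pos.trans_le hR
    calc φ 1 / A * R ^ δ ≤ A * (1 / R) ^ δ * φ R / A * R ^ δ := by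
          gcongr
          exact hφ one_pos hR
      _ = φ R := by
        rw [Real.div_rpow zero_le_one hR₀.le, Real.one_rpow]
        field_simp
  exact tendsto_atTop_mono' _ power_le ((tendsto_rpow_atTop hδ).const_mul_atTop (by positivity))

theorem bddAbove (hφ : LowerScaling φ A δ) (hδ : 0 < δ) (hpos : 0 < φ 1) :
    BddAbove {r : ℝ | 0 < r ∧ φ r ≤ 1} := by
  obtain ⟨M, hM⟩ := eventually_atTop.1 ((hφ.tendsto_atTop hδ hpos).eventually_gt_atTop 1)
  exact ⟨M, fun r hr => le_of_not_ge fun hMr => (hM r hMr).not_ge hr.2⟩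

theorem le_criticalRadius (hφ : LowerScaling φ A δ) (hδ : 0 < δ) (hpos : 0 < φ 1) {r : ℝ}
    (hr : 0 < r) (hr1 : φ r ≤ 1) : r ≤ criticalRadius φ :=
  le_csSup (hφ.bddAbove hδ hpos) ⟨hr, hr1⟩

theorem mul_rpow_le_criticalRadius (hφ : LowerScaling φ A δ) (hδ : 0 < δ) (hpos : 0 < φ 1)
    {R T : ℝ} (hR : 0 < R) (hT : 1 ≤ T) (hRT : φ R ≤ T) :
    R * (A * T) ^ (-δ⁻¹) ≤ criticalRadius φ := by
  have hA : 1 ≤ A := hφ.one_le_const hpos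
  have hAT : 1 ≤ A * T := one_le_mul_of_one_le_of_one_le hA hT
  set s := (A * T) ^ (-δ⁻¹) with hs
  have hs₁ : s ≤ 1 := Real.rpow_le_one_of_one_le_of_nonpos hAT (by simpa using hδ.le)
  have hsδ : s ^ δ = (A * T)⁻¹ := by
    rw [hs, ← Real.rpow_mul (by positivity), neg_mul, inv_mul_cancel₀ hδ.ne', Real.rpow_neg_one]
  refine hφ.le_criticalRadius hδ hpos (by positivity) ?_
  calc φ (R * s) ≤ A * (R * s / R) ^ δ * φ R :=
        hφ (by positivity) (mul_le_of_le_one_right hR.le hs₁)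
    _ ≤ A * (R * s / R) ^ δ * T := by gcongr
    _ = 1 := by
      rw [mul_div_cancel_left₀ _ hR.ne', hsδ]
      field_simp

theorem criticalRadius_pos (hφ : LowerScaling φ A δ) (hδ : 0 < δ) (hpos : 0 < φ 1) :
    0 < criticalRadius φ := by
  have hA : 0 < A := one_pos.trans_le (hφ.one_le_const hpos)
  exact lt_of_lt_of_le (by positivity)
    (hφ.mul_rpow_le_criticalRadius hδ hpos one_pos (le_max_left 1 (φ 1)) (le_max_right 1 (φ 1)))

theorem exists_le_one_of_lt_criticalRadius (hφ : LowerScaling φ A δ) (hδ : 0 < δ) (hpos : 0 < φ 1)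
    {s : ℝ} (hs : s < criticalRadius φ) : ∃ r, s < r ∧ r ≤ criticalRadius φ ∧ 0 < r ∧ φ r ≤ 1 := by
  have nonempty : {r : ℝ | 0 < r ∧ φ r ≤ 1}.Nonempty := by
    refine nonempty_iff_ne_empty.2 fun hempty => (hφ.criticalRadius_pos hδ hpos).ne' ?_
    rw [criticalRadius, hempty, Real.sSup_empty]
  obtain ⟨r, ⟨hr, hr1⟩, hsr⟩ := exists_lt_of_lt_csSup nonempty hs
  exact ⟨r, hsr, hφ.le_criticalRadius hδ hpos hr hr1, hr, hr1⟩

end LowerScaling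

/-- A family of positive scale functions, indexed by the points of a metric space, each growing at
least like the power `δ > 0` of the scale, and at most like the power `ν`, the latter also when the
centre is moved by no more than the larger scale. The constants are `A` and `B`. -/
structure TwoSidedScaling {X : Type*} [PseudoMetricSpace X] (Φ : X → ℝ → ℝ) (A δ B ν : ℝ) :
    Prop where
  delta_pos : 0 < δ
  nu_nonneg : 0 ≤ ν
  pos : ∀ x ⦃r⦄, 0 < r → 0 < Φ x r
  lower : ∀ x, LowerScaling (Φ x) A δ
  upper : ∀ ⦃x y r R⦄, 0 < r → r ≤ R → dist x y ≤ R → Φ y R ≤ B * (R / r) ^ ν * Φ x r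

namespace TwoSidedScaling

variable {X : Type*} [PseudoMetricSpace X] {Φ : X → ℝ → ℝ} {A δ B ν : ℝ}

theorem one_le_upper_const (hΦ : TwoSidedScaling Φ A δ B ν) (x : X) : 1 ≤ B := by
  have h := hΦ.upper one_pos le_rfl ((dist_self x).trans_le zero_le_one)
  rw [div_one, Real.one_rpow, mul_one] at h
  exact (le_mul_iff_one_le_left (hΦ.pos x one_pos)).1 h

theorem one_le_lower_const (hΦ : TwoSidedScaling Φ A δ B ν) (x : X) : 1 ≤ A :=
  (hΦ.lower x).one_le_const (hΦ.pos x one_pos)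

theorem criticalRadius_pos (hΦ : TwoSidedScaling Φ A δ B ν) (x : X) : 0 < criticalRadius (Φ x) :=
  (hΦ.lower x).criticalRadius_pos hΦ.delta_pos (hΦ.pos x one_pos)

theorem apply_criticalRadius_add_dist_le (hΦ : TwoSidedScaling Φ A δ B ν) (x y : X) :
    Φ y (criticalRadius (Φ x) + dist x y) ≤
      B * 2 ^ ν * (1 + dist x y / criticalRadius (Φ x)) ^ ν := by
  have hρ := hΦ.criticalRadius_pos x
  have hB : 0 < B := one_pos.trans_le (hΦ.one_le_upper_const x)
  have hν := hΦ.nu_nonneg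
  have hd : 0 ≤ dist x y := dist_nonneg
  obtain ⟨r, hρr, hrρ, hr, hr1⟩ :=
    (hΦ.lower x).exists_le_one_of_lt_criticalRadius hΦ.delta_pos (hΦ.pos x one_pos)
      (half_lt_self hρ)
  have hΦr := hΦ.pos x hr
  set ρ := criticalRadius (Φ x)
  have ratio_le : (ρ + dist x y) / r ≤ 2 * (1 + dist x y / ρ) := calc
    (ρ + dist x y) / r ≤ (ρ + dist x y) / (ρ / 2) := by gcongr
    _ = 2 * (1 + dist x y / ρ) := by field_simp
  calc Φ y (ρ + dist x y) ≤ B * ((ρ + dist x y) / r) ^ ν * Φ x r :=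
        hΦ.upper hr (by linarith) (by linarith)
    _ ≤ B * (2 * (1 + dist x y / ρ)) ^ ν * 1 := by gcongr
    _ = B * 2 ^ ν * (1 + dist x y / ρ) ^ ν := by
      rw [Real.mul_rpow two_pos.le (by positivity)]
      ring

theorem inv_mul_criticalRadius_mul_rpow_le (hΦ : TwoSidedScaling Φ A δ B ν) (x y : X) :
    ((A * B * 2 ^ ν) ^ δ⁻¹)⁻¹ * criticalRadius (Φ x) *
      (1 + dist x y / criticalRadius (Φ x)) ^ (-(ν / δ)) ≤ criticalRadius (Φ y) := by
  have hρ := hΦ.criticalRadius_pos x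
  have hA := hΦ.one_le_lower_const x
  have hB := hΦ.one_le_upper_const x
  have growth := hΦ.apply_criticalRadius_add_dist_le x y
  set ρ := criticalRadius (Φ x)
  set t := 1 + dist x y / ρ with ht
  have ht₁ : 1 ≤ t := le_add_of_nonneg_right (by positivity)
  have one_le_growth : 1 ≤ B * 2 ^ ν * t ^ ν :=
    one_le_mul_of_one_le_of_one_le
      (one_le_mul_of_one_le_of_one_le hB (Real.one_le_rpow one_le_two hΦ.nu_nonneg))
      (Real.one_le_rpow ht₁ hΦ.nu_nonneg)
  calc ((A * B * 2 ^ ν) ^ δ⁻¹)⁻¹ * ρ * t ^ (-(ν / δ))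
      ≤ ((A * B * 2 ^ ν) ^ δ⁻¹)⁻¹ * (ρ * t) * t ^ (-(ν / δ)) := by
        gcongr
        exact le_mul_of_one_le_right hρ.le ht₁
    _ = ρ * t * (A * (B * 2 ^ ν * t ^ ν)) ^ (-δ⁻¹) := by
        rw [← mul_assoc A, ← mul_assoc A,
          Real.mul_rpow (x := A * B * 2 ^ ν) (by positivity) (by positivity),
          ← Real.rpow_mul (by positivity), mul_neg, ← div_eq_mul_inv ν,
          Real.rpow_neg (x := A * B * 2 ^ ν) (by positivity)]
        ring
    _ = (ρ + dist x y) * (A * (B * 2 ^ ν * t ^ ν)) ^ (-δ⁻¹) := by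
        rw [ht, mul_one_add, mul_div_cancel₀ _ hρ.ne']
    _ ≤ criticalRadius (Φ y) :=
        (hΦ.lower y).mul_rpow_le_criticalRadius hΦ.delta_pos (hΦ.pos y one_pos) (by positivity)
          one_le_growth growth

theorem exists_criticalRadius_comparison (hΦ : TwoSidedScaling Φ A δ B ν) [Nonempty X] :
    ∃ C k : ℝ, 0 < C ∧ 1 ≤ k ∧ ∀ x y : X,
      C⁻¹ * criticalRadius (Φ x) * (1 + dist x y / criticalRadius (Φ x)) ^ (-k) ≤
        criticalRadius (Φ y) ∧
      criticalRadius (Φ y) ≤ C * criticalRadius (Φ x) *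
        (1 + dist x y / criticalRadius (Φ x)) ^ (k / (k + 1)) := by
  obtain ⟨x₀⟩ := ‹Nonempty X›
  have hδ := hΦ.delta_pos
  set K := (A * B * 2 ^ ν) ^ δ⁻¹
  set k := max 1 (ν / δ)
  have hk : 1 ≤ k := le_max_left _ _
  have hK : 1 ≤ K := by
    refine Real.one_le_rpow ?_ (by positivity)
    exact one_le_mul_of_one_le_of_one_le
      (one_le_mul_of_one_le_of_one_le (hΦ.one_le_lower_const x₀) (hΦ.one_le_upper_const x₀))
      (Real.one_le_rpow one_le_two hΦ.nu_nonneg)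
  have lower_bound (x y : X) : K⁻¹ * criticalRadius (Φ x) *
      (1 + dist x y / criticalRadius (Φ x)) ^ (-k) ≤ criticalRadius (Φ y) := by
    have hρ := hΦ.criticalRadius_pos x
    refine le_trans ?_ (hΦ.inv_mul_criticalRadius_mul_rpow_le x y)
    gcongr
    · exact le_add_of_nonneg_right (by positivity)
    · exact le_max_right _ _
  refine ⟨K * 2 ^ k, k, by positivity, hk, fun x y => ⟨?_, ?_⟩⟩
  · have hρ := hΦ.criticalRadius_pos x
    refine le_trans ?_ (lower_bound x y)
    gcongr
    exact le_mul_of_one_le_right (by positivity) (Real.one_le_rpow one_le_two (by positivity))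
  · rw [dist_comm]
    exact le_mul_one_add_div_rpow_of_mul_rpow_neg_le (hΦ.criticalRadius_pos x)
      (hΦ.criticalRadius_pos y) dist_nonneg hK (by positivity) (lower_bound y x)

end TwoSidedScaling

theorem le_pow_mul_apply_pow_mul {f : ℝ → ℝ} {c θ : ℝ} (hc : 0 ≤ c) (hθ : 0 < θ)
    (hf : ∀ R, 0 < R → f R ≤ c * f (θ * R)) (m : ℕ) {R : ℝ} (hR : 0 < R) :
    f R ≤ c ^ m * f (θ ^ m * R) := by
  induction m with
  | zero => simp
  | succ m ih =>
    calc f R ≤ c ^ m * f (θ ^ m * R) := ih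
      _ ≤ c ^ m * (c * f (θ * (θ ^ m * R))) := by
        gcongr
        exact hf _ (by positivity)
      _ = c ^ (m + 1) * f (θ ^ (m + 1) * R) := by ring_nf

theorem le_mul_div_rpow_logb_mul_of_le_mul {f : ℝ → ℝ} {c θ r R : ℝ} (hc : 1 ≤ c) (hθ₀ : 0 < θ)
    (hθ₁ : θ < 1) (hmono : MonotoneOn f (Ioi 0)) (hf : ∀ R, 0 < R → f R ≤ c * f (θ * R))
    (hr : 0 < r) (hrR : r ≤ R) (hfr : 0 ≤ f r) :
    f R ≤ c * (R / r) ^ Real.logb θ⁻¹ c * f r := by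
  have hR : 0 < R := hr.trans_le hrR
  have hθinv : 1 < θ⁻¹ := (one_lt_inv₀ hθ₀).2 hθ₁
  obtain ⟨m, hlt, hle⟩ := exists_nat_pow_near_of_lt_one (div_pos hr hR) ((div_le_one hR).2 hrR)
    hθ₀ hθ₁
  have pow_le : c ^ m ≤ (R / r) ^ Real.logb θ⁻¹ c := calc
    c ^ m = (θ⁻¹ ^ m) ^ Real.logb θ⁻¹ c := by
      rw [← Real.rpow_natCast, ← Real.rpow_natCast, ← Real.rpow_mul (by positivity), mul_comm,
        Real.rpow_mul (by positivity), Real.rpow_logb (by positivity) hθinv.ne' (by positivity)]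
    _ ≤ (R / r) ^ Real.logb θ⁻¹ c := by
      refine Real.rpow_le_rpow (by positivity) ?_ (Real.logb_nonneg hθinv hc)
      rw [inv_pow, ← inv_div]
      exact inv_anti₀ (by positivity) hle
  calc f R ≤ c ^ (m + 1) * f (θ ^ (m + 1) * R) :=
        le_pow_mul_apply_pow_mul (by positivity) hθ₀ hf (m + 1) hR
    _ ≤ c ^ (m + 1) * f r := by
      gcongr
      exact hmono (mem_Ioi.2 (by positivity)) hr ((lt_div_iff₀ hR).1 hlt).le
    _ = c * c ^ m * f r := by ring
    _ ≤ c * (R / r) ^ Real.logb θ⁻¹ c * f r := by gcongr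

theorem exists_mul_one_sub_pow_rpow_lt (C : ℝ) (n : ℕ) {p ε : ℝ} (hp : 0 < p) (hε : 0 < ε) :
    ∃ θ ∈ Ioo (0 : ℝ) 1, C * (1 - θ ^ n) ^ p < ε := by
  have hcont : ContinuousAt (fun θ : ℝ => C * (1 - θ ^ n) ^ p) 1 :=
    continuousAt_const.mul (ContinuousAt.rpow_const (by fun_prop) (Or.inr hp.le))
  have hlt : ∀ᶠ θ in nhdsWithin (1 : ℝ) (Iio 1), C * (1 - θ ^ n) ^ p < ε :=
    nhdsWithin_le_nhds (hcont.eventually_lt continuousAt_const (by simp [hp.ne', hε]))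
  obtain ⟨θ, hθ, hmem⟩ := (hlt.and (Ioo_mem_nhdsLT one_pos)).exists
  exact ⟨θ, hmem, hθ⟩

section Measure

variable {α : Type*} [MeasurableSpace α] {μ : Measure α} {f : α → ℝ} {q : ℝ}

theorem memLp_ofReal_of_integrable_rpow (hq : 0 < q) (hf : ∀ x, 0 ≤ f x)
    (hint : Integrable (fun x => f x ^ q) μ) : MemLp f (ENNReal.ofReal q) μ := by
  have rpow_rpow_inv : (fun x => (f x ^ q) ^ q⁻¹) = f :=
    funext fun x => Real.rpow_rpow_inv (hf x) hq.ne'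
  have hmeas : AEStronglyMeasurable f μ := by
    rw [← rpow_rpow_inv]
    exact (hint.aestronglyMeasurable.aemeasurable.pow_const q⁻¹).aestronglyMeasurable
  rw [← integrable_norm_rpow_iff hmeas (by simpa using hq) ENNReal.ofReal_ne_top,
    ENNReal.toReal_ofReal hq.le]
  simpa only [Real.norm_of_nonneg (hf _)] using hint

theorem setIntegral_le_rpow_mul_measureReal_rpow {s : Set α} (hq : 1 < q) (hf : ∀ x, 0 ≤ f x)
    (hs : μ s ≠ ⊤) (hLq : MemLp f (ENNReal.ofReal q) (μ.restrict s)) :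
    ∫ x in s, f x ∂μ ≤ (∫ x in s, f x ^ q ∂μ) ^ (1 / q) * μ.real s ^ (1 - 1 / q) := by
  have : IsFiniteMeasure (μ.restrict s) := isFiniteMeasure_restrict.2 hs
  have hconj : q.HolderConjugate q.conjExponent := Real.HolderConjugate.conjExponent hq
  have hexp : 1 / q.conjExponent = 1 - 1 / q := by
    rw [one_div, one_div, hconj.one_sub_inv]
  simpa [hexp] using integral_mul_le_Lp_mul_Lq_of_nonneg (g := fun _ => (1 : ℝ)) hconj
    (Eventually.of_forall hf) (Eventually.of_forall fun _ => zero_le_one) hLq (memLp_const 1)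

theorem setIntegral_le_of_reverse_holder {C : ℝ} {s t : Set α} (hq : 1 < q) (hf : ∀ x, 0 ≤ f x)
    (hint : IntegrableOn (fun x => f x ^ q) t μ) (hst : s ⊆ t) (ht : 0 < μ.real t)
    (hrev : ((μ.real t)⁻¹ * ∫ x in t, f x ^ q ∂μ) ^ (1 / q) ≤
      C * ((μ.real t)⁻¹ * ∫ x in t, f x ∂μ)) :
    ∫ x in s, f x ∂μ ≤ C * (μ.real s / μ.real t) ^ (1 - 1 / q) * ∫ x in t, f x ∂μ := by
  have hq₀ : 0 < q := one_pos.trans hq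
  have ht_top : μ t ≠ ⊤ := (ENNReal.toReal_pos_iff.1 ht).2.ne
  have hfq : ∀ x, 0 ≤ f x ^ q := fun x => Real.rpow_nonneg (hf x) q
  have holder := setIntegral_le_rpow_mul_measureReal_rpow hq hf
    (measure_ne_top_of_subset hst ht_top)
    (memLp_ofReal_of_integrable_rpow hq₀ hf (hint.mono_set hst))
  have mono : ∫ x in s, f x ^ q ∂μ ≤ ∫ x in t, f x ^ q ∂μ :=
    setIntegral_mono_set hint (Eventually.of_forall hfq) hst.eventuallyLE
  have hs₀ : 0 ≤ ∫ x in s, f x ^ q ∂μ := integral_nonneg hfq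
  have ht₀ : 0 ≤ ∫ x in t, f x ^ q ∂μ := hs₀.trans mono
  calc ∫ x in s, f x ∂μ
      ≤ (∫ x in s, f x ^ q ∂μ) ^ (1 / q) * μ.real s ^ (1 - 1 / q) := holder
    _ ≤ (∫ x in t, f x ^ q ∂μ) ^ (1 / q) * μ.real s ^ (1 - 1 / q) := by gcongr
    _ = μ.real t ^ (1 / q) * ((μ.real t)⁻¹ * ∫ x in t, f x ^ q ∂μ) ^ (1 / q) *
          μ.real s ^ (1 - 1 / q) := by
      rw [← Real.mul_rpow ht.le (by positivity), mul_inv_cancel_left₀ ht.ne']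
    _ ≤ μ.real t ^ (1 / q) * (C * ((μ.real t)⁻¹ * ∫ x in t, f x ∂μ)) *
          μ.real s ^ (1 - 1 / q) := by gcongr
    _ = C * (μ.real s / μ.real t) ^ (1 - 1 / q) * ∫ x in t, f x ∂μ := by
      rw [Real.div_rpow measureReal_nonneg ht.le, Real.rpow_sub ht, Real.rpow_one]
      field_simp

end Measure

theorem measureReal_ball_pos {X : Type*} [PseudoMetricSpace X] [ProperSpace X] [MeasurableSpace X]
    (μ : Measure X) [μ.IsOpenPosMeasure] [IsFiniteMeasureOnCompacts μ] (x : X) {r : ℝ}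
    (hr : 0 < r) : 0 < μ.real (ball x r) :=
  ENNReal.toReal_pos (measure_ball_pos μ x hr).ne' measure_ball_lt_top.ne

theorem measureReal_ball_div_measureReal_ball {E : Type*} [NormedAddCommGroup E] [NormedSpace ℝ E]
    [FiniteDimensional ℝ E] [MeasurableSpace E] [BorelSpace E] (μ : Measure E) [μ.IsAddHaarMeasure]
    (x : E) {r R : ℝ} (hr : 0 < r) (hR : 0 < R) :
    μ.real (ball x r) / μ.real (ball x R) = (r / R) ^ Module.finrank ℝ E := by
  have unit_pos : 0 < μ.real (ball (0 : E) 1) := measureReal_ball_pos μ 0 one_pos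
  simp only [measureReal_def, Measure.addHaar_ball_of_pos μ x hr,
    Measure.addHaar_ball_of_pos μ x hR, ENNReal.toReal_mul,
    ENNReal.toReal_ofReal (pow_nonneg hr.le _), ENNReal.toReal_ofReal (pow_nonneg hR.le _)]
  rw [← measureReal_def, mul_div_mul_right _ _ unit_pos.ne', div_pow]

namespace ReverseHolder

variable {n : ℕ} {V : En n → ℝ} {q C₀ : ℝ}

theorem integrableOn_ball (hV : ReverseHolder n V q C₀) (hq : 1 < q) (x : En n) (r : ℝ) :
    IntegrableOn V (ball x r) := by
  obtain ⟨hV₀, -, hint, -⟩ := hV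
  rcases le_or_gt r 0 with hr | hr
  · simp [ball_eq_empty.2 hr]
  · have : IsFiniteMeasure (volume.restrict (ball x r)) :=
      isFiniteMeasure_restrict.2 measure_ball_lt_top.ne
    exact (memLp_ofReal_of_integrable_rpow (one_pos.trans hq) hV₀ (hint x r hr)).integrable
      (ENNReal.one_le_ofReal.2 hq.le)

theorem setIntegral_ball_mono (hV : ReverseHolder n V q C₀) (hq : 1 < q) {x y : En n} {r R : ℝ}
    (h : r + dist x y ≤ R) : ∫ z in ball x r, V z ≤ ∫ z in ball y R, V z :=
  setIntegral_mono_set (hV.integrableOn_ball hq y R) (Eventually.of_forall hV.1)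
    (ball_subset_ball' h).eventuallyLE

theorem setIntegral_le_mul_setIntegral_ball (hV : ReverseHolder n V q C₀) (hq : 1 < q) (x : En n)
    {R : ℝ} (hR : 0 < R) {s : Set (En n)} (hs : s ⊆ ball x R) :
    ∫ y in s, V y ≤ C₀ * (volume.real s / volume.real (ball x R)) ^ (1 - 1 / q) *
      ∫ y in ball x R, V y := by
  obtain ⟨hV₀, -, hint, hrev⟩ := hV
  exact setIntegral_le_of_reverse_holder hq hV₀ (hint x R hR) hs
    (measureReal_ball_pos volume x hR) (hrev x R hR)

theorem setIntegral_ball_le_mul_rpow (hV : ReverseHolder n V q C₀) (hq : 1 < q) (x : En n)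
    {r R : ℝ} (hr : 0 < r) (hrR : r ≤ R) :
    ∫ y in ball x r, V y ≤ C₀ * (r / R) ^ (n * (1 - 1 / q)) * ∫ y in ball x R, V y := by
  have hR : 0 < R := hr.trans_le hrR
  have h := hV.setIntegral_le_mul_setIntegral_ball hq x hR (ball_subset_ball hrR)
  rwa [measureReal_ball_div_measureReal_ball volume x hr hR, finrank_euclideanSpace_fin,
    ← Real.rpow_natCast, ← Real.rpow_mul (by positivity)] at h

theorem exists_setIntegral_ball_le_two_mul (hV : ReverseHolder n V q C₀) (hq : 1 < q) :
    ∃ θ ∈ Ioo (0 : ℝ) 1, ∀ (x : En n) (R : ℝ), 0 < R →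
      ∫ y in ball x R, V y ≤ 2 * ∫ y in ball x (θ * R), V y := by
  have hp : 0 < 1 - 1 / q := sub_pos.2 ((div_lt_one (one_pos.trans hq)).2 hq)
  obtain ⟨θ, ⟨hθ₀, hθ₁⟩, hθ⟩ := exists_mul_one_sub_pow_rpow_lt C₀ n hp one_half_pos
  refine ⟨θ, ⟨hθ₀, hθ₁⟩, fun x R hR => ?_⟩
  have hsub : ball x (θ * R) ⊆ ball x R :=
    ball_subset_ball (mul_le_of_le_one_left hR.le hθ₁.le)
  have shell_measure :
      volume.real (ball x R \ ball x (θ * R)) / volume.real (ball x R) = 1 - θ ^ n := by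
    rw [measureReal_sdiff hsub measurableSet_ball, sub_div,
      div_self (measureReal_ball_pos volume x hR).ne',
      measureReal_ball_div_measureReal_ball volume x (by positivity) hR,
      finrank_euclideanSpace_fin, mul_div_cancel_right₀ _ hR.ne']
  have shell_mass := hV.setIntegral_le_mul_setIntegral_ball hq x hR
    (sdiff_subset (s := ball x R) (t := ball x (θ * R)))
  rw [setIntegral_sdiff measurableSet_ball (hV.integrableOn_ball hq x R) hsub,
    shell_measure] at shell_mass
  have half_mass : C₀ * (1 - θ ^ n) ^ (1 - 1 / q) * ∫ y in ball x R, V y ≤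
      1 / 2 * ∫ y in ball x R, V y :=
    mul_le_mul_of_nonneg_right hθ.le (integral_nonneg hV.1)
  linarith

theorem exists_setIntegral_ball_le_mul_rpow (hV : ReverseHolder n V q C₀) (hq : 1 < q) :
    ∃ κ : ℝ, ∀ (x : En n) (r R : ℝ), 0 < r → r ≤ R →
      ∫ y in ball x R, V y ≤ 2 * (R / r) ^ κ * ∫ y in ball x r, V y := by
  obtain ⟨θ, ⟨hθ₀, hθ₁⟩, hθ⟩ := hV.exists_setIntegral_ball_le_two_mul hq
  refine ⟨Real.logb θ⁻¹ 2, fun x r R hr hrR => ?_⟩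
  exact le_mul_div_rpow_logb_mul_of_le_mul one_le_two hθ₀ hθ₁
    (fun a _ b _ hab => hV.setIntegral_ball_mono hq (by simpa using hab)) (hθ x) hr hrR
    (integral_nonneg hV.1)

end ReverseHolder

/-- The scale-invariant mass `r ^ (2 - n) * ∫ y in ball x r, V y`, whose critical radius at `x` is
`ρ(x)`. -/
def normalizedMass (n : ℕ) (V : En n → ℝ) (x : En n) (r : ℝ) : ℝ :=
  r ^ (2 - (n : ℝ)) * ∫ y in ball x r, V y

theorem critRad_eq_criticalRadius_normalizedMass (n : ℕ) (V : En n → ℝ) (x : En n) :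
    critRad n V x = criticalRadius (normalizedMass n V x) :=
  rfl

theorem normalizedMass_nonneg {n : ℕ} {V : En n → ℝ} (hV : ∀ x, 0 ≤ V x) (x : En n) {r : ℝ}
    (hr : 0 ≤ r) : 0 ≤ normalizedMass n V x r :=
  mul_nonneg (Real.rpow_nonneg hr _) (integral_nonneg hV)

namespace ReverseHolder

variable {n : ℕ} {V : En n → ℝ} {q C₀ : ℝ}

theorem lowerScaling_normalizedMass (hV : ReverseHolder n V q C₀) (hq : 1 < q) (x : En n) :
    LowerScaling (normalizedMass n V x) C₀ (2 - n / q) := by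
  intro r R hr hrR
  have hR : 0 < R := hr.trans_le hrR
  have hexp : (2 - n / q : ℝ) = (2 - n) + n * (1 - 1 / q) := by ring
  calc normalizedMass n V x r
      ≤ r ^ (2 - n : ℝ) * (C₀ * (r / R) ^ (n * (1 - 1 / q)) * ∫ y in ball x R, V y) :=
        mul_le_mul_of_nonneg_left (hV.setIntegral_ball_le_mul_rpow hq x hr hrR) (by positivity)
    _ = C₀ * (r / R) ^ (2 - n / q) * normalizedMass n V x R := by
        rw [normalizedMass, hexp, Real.rpow_add (by positivity),
          Real.div_rpow (z := 2 - (n : ℝ)) hr.le hR.le]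
        field_simp

theorem exists_normalizedMass_le_mul_rpow (hV : ReverseHolder n V q C₀) (hq : 1 < q) :
    ∃ B ν : ℝ, 0 ≤ ν ∧ ∀ ⦃x y r R⦄, 0 < r → r ≤ R → dist x y ≤ R →
      normalizedMass n V y R ≤ B * (R / r) ^ ν * normalizedMass n V x r := by
  obtain ⟨κ, hκ⟩ := hV.exists_setIntegral_ball_le_mul_rpow hq
  refine ⟨2 * 2 ^ κ, max 0 (κ + (2 - n)), le_max_left _ _, fun x y r R hr hrR hxy => ?_⟩
  have hR : 0 < R := hr.trans_le hrR
  have mass_le : ∫ z in ball y R, V z ≤ 2 * (2 * R / r) ^ κ * ∫ z in ball x r, V z :=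
    (hV.setIntegral_ball_mono hq (by rw [dist_comm]; linarith)).trans
      (hκ x r (2 * R) hr (by linarith))
  calc normalizedMass n V y R
      ≤ R ^ (2 - n : ℝ) * (2 * (2 * R / r) ^ κ * ∫ z in ball x r, V z) :=
        mul_le_mul_of_nonneg_left mass_le (by positivity)
    _ = 2 * 2 ^ κ * (R / r) ^ (κ + (2 - n)) * normalizedMass n V x r := by
        rw [normalizedMass, mul_div_assoc, Real.mul_rpow two_pos.le (by positivity),
          Real.rpow_add (by positivity), Real.div_rpow (z := 2 - (n : ℝ)) hR.le hr.le]
        field_simp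
    _ ≤ 2 * 2 ^ κ * (R / r) ^ max 0 (κ + (2 - n)) * normalizedMass n V x r := by
        have := normalizedMass_nonneg hV.1 x hr.le
        gcongr
        · exact (one_le_div hr).2 hrR
        · exact le_max_right _ _

theorem exists_twoSidedScaling_normalizedMass (hV : ReverseHolder n V q C₀) (hq : 1 < q)
    (hnq : (n : ℝ) / 2 < q) (hpos : ∀ x r, 0 < r → 0 < normalizedMass n V x r) :
    ∃ B ν : ℝ, TwoSidedScaling (normalizedMass n V) C₀ (2 - n / q) B ν := by
  obtain ⟨B, ν, hν, hupper⟩ := hV.exists_normalizedMass_le_mul_rpow hq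
  refine ⟨B, ν, ?_, hν, hpos, hV.lowerScaling_normalizedMass hq, hupper⟩
  rw [sub_pos, div_lt_iff₀ (one_pos.trans hq)]
  linarith

theorem normalizedMass_eq_zero_of_eq_zero (hV : ReverseHolder n V q C₀) (hq : 1 < q) {x : En n}
    {r : ℝ} (hr : 0 < r) (hzero : normalizedMass n V x r = 0) (y : En n) {R : ℝ} (hR : 0 < R) :
    normalizedMass n V y R = 0 := by
  obtain ⟨B, ν, -, hupper⟩ := hV.exists_normalizedMass_le_mul_rpow hq
  set S := max R (max r (dist x y))
  have hRS : R ≤ S := le_max_left _ _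
  have large_scale : normalizedMass n V y S = 0 := by
    refine le_antisymm ?_ (normalizedMass_nonneg hV.1 y (hR.le.trans hRS))
    simpa [hzero] using hupper (x := x) (y := y) hr
      ((le_max_left _ _).trans (le_max_right _ _)) ((le_max_right _ _).trans (le_max_right _ _))
  refine le_antisymm ?_ (normalizedMass_nonneg hV.1 y hR.le)
  simpa [large_scale] using hV.lowerScaling_normalizedMass hq y hR hRS

end ReverseHolder

theorem stmt_0_general (n : ℕ) (V : En n → ℝ) (q C₀ : ℝ) (hq : 1 < q)
    (hnq : (n : ℝ) / 2 < q) (hV : ReverseHolder n V q C₀) :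
    ∃ C k₀ : ℝ, 0 < C ∧ 1 ≤ k₀ ∧ ∀ x y : En n,
      C⁻¹ * critRad n V x * (1 + dist x y / critRad n V x) ^ (-k₀) ≤ critRad n V y ∧
      critRad n V y ≤ C * critRad n V x *
        (1 + dist x y / critRad n V x) ^ (k₀ / (k₀ + 1)) := by
  simp only [critRad_eq_criticalRadius_normalizedMass]
  by_cases hpos : ∀ x r, 0 < r → 0 < normalizedMass n V x r
  · obtain ⟨B, ν, hscaling⟩ := hV.exists_twoSidedScaling_normalizedMass hq hnq hpos
    exact hscaling.exists_criticalRadius_comparison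
  · -- Here `V` vanishes almost everywhere, and the supremum defining `critRad` takes its junk
    -- value `0`.
    push Not at hpos
    obtain ⟨x₀, r₀, hr₀, hle⟩ := hpos
    have hzero : normalizedMass n V x₀ r₀ = 0 := hle.antisymm (normalizedMass_nonneg hV.1 x₀ hr₀.le)
    have radius_zero (x : En n) : criticalRadius (normalizedMass n V x) = 0 :=
      criticalRadius_eq_zero_of_forall_eq_zero fun r hr =>
        hV.normalizedMass_eq_zero_of_eq_zero hq hr₀ hzero x hr
    exact ⟨1, 1, one_pos, le_rfl, fun x y => by simp [radius_zero]⟩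

theorem stmt_0 (n : ℕ) (hn : 3 ≤ n) (V : En n → ℝ) (q C₀ : ℝ)
    (hq : (n : ℝ) / 2 < q) (hC₀ : 0 < C₀) (hV : ReverseHolder n V q C₀) :
    ∃ C k₀ : ℝ, 0 < C ∧ 1 ≤ k₀ ∧ ∀ x y : En n,
      C⁻¹ * critRad n V x * (1 + dist x y / critRad n V x) ^ (-k₀) ≤ critRad n V y ∧
      critRad n V y ≤ C * critRad n V x *
        (1 + dist x y / critRad n V x) ^ (k₀ / (k₀ + 1)) := by
  have hn' : (3 : ℝ) ≤ n := by exact_mod_cast hn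
  exact stmt_0_general n V q C₀ (by linarith) hq hV
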